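/- The number of rational points on the 2-sphere with denominator at most T satisfies N(S²;T) = (3/(2G)) T² + O(T (log T)³), where G = L(χ₋₄,2) is Catalan's constant. -/

import Mathlib

open Finset

/-!
A primitive point `x` on the sphere of radius `q` forces `q` odd and exactly one coordinate odd;
by symmetry the odd one may be taken last. Points with last coordinate odd are the images
`(2 α β̄, |α|² - |β|²)`, under the Hopf map, of coprime pairs of Gaussian integers with
`|α|² + |β|² = q`, and each point has four preimages, one for every unit. A coprime pair has a
slope `w` modulo `q` with `α w ≡ β̄` and `β w ≡ -ᾱ`, which satisfies `|w|² ≡ -1`; reduction theory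
of binary Hermitian forms shows that every solution of this congruence occurs, for a single orbit of
the eight integral matrices of `SU₂`. So the number of points is six times the number of points of
the conic `x² + y² = -1` modulo `q`. This count is multiplicative, and Hensel lifting together with
a Jacobi sum modulo `p` identifies it with the Dirichlet convolution of `μ χ₋₄` with the identity on
odd numbers. Summing the convolution gives the main term, with an error `O(T log T)`.
-/

namespace RationalSphere

section Counting

variable {X Y : Type*}

/- Fibres of cardinality `0` in the sense of `Nat.card` may be empty or infinite. -/
lemma card_eq_mul_of_card_fiber (f : X → Y) (k : ℕ) (h : ∀ y, Nat.card {x // f x = y} = k) :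
    Nat.card X = Nat.card Y * k := by
  rcases eq_or_ne k 0 with rfl | hk
  · by_contra hX
    obtain ⟨⟨x⟩, _⟩ := Nat.card_ne_zero.1 (by simpa using hX)
    exact Nat.card_ne_zero.2 ⟨⟨⟨x, rfl⟩⟩, inferInstance⟩ (h (f x))
  · have (y : Y) : Finite {x // f x = y} := (Nat.card_ne_zero.1 (by rwa [h y])).2
    rw [← Nat.card_congr (Equiv.sigmaFiberEquiv f),
      Nat.card_congr (Equiv.sigmaCongrRight fun y => Finite.equivFinOfCardEq (h y)),
      Nat.card_congr (Equiv.sigmaEquivProd Y (Fin k)), Nat.card_prod, Nat.card_fin]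

lemma card_eq_mul_of_simplyTransitive_on_fibers {G : Type*} {f : X → Y} (act : G → X → X)
    (hf : Function.Surjective f) (hfree : ∀ x, Function.Injective fun g => act g x)
    (htrans : ∀ x x', f x = f x' ↔ ∃ g, act g x = x') :
    Nat.card X = Nat.card Y * Nat.card G := by
  refine card_eq_mul_of_card_fiber f _ fun y => ?_
  obtain ⟨x, rfl⟩ := hf y
  symm
  refine Nat.card_eq_of_bijective
    (fun g => (⟨act g x, ((htrans x _).2 ⟨g, rfl⟩).symm⟩ : {x' // f x' = f x})) ⟨?_, ?_⟩
  · exact fun g g' h => hfree x (congrArg Subtype.val h)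
  · rintro ⟨x', hx'⟩
    obtain ⟨g, hg⟩ := (htrans x x').1 hx'.symm
    exact ⟨g, Subtype.ext hg⟩

end Counting

section GaussianIntegers

lemma norm_eq_re_sq_add_im_sq (z : GaussianInt) : z.norm = z.re ^ 2 + z.im ^ 2 := by
  rw [Zsqrtd.norm_def]; ring

lemma norm_add_norm_eq_iff {α β : GaussianInt} {n : ℤ} :
    α.norm + β.norm = n ↔ α * star α + β * star β = n := by
  rw [← Zsqrtd.norm_eq_mul_conj, ← Zsqrtd.norm_eq_mul_conj, ← Int.cast_add, Int.cast_inj]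

lemma intCast_dvd_star_iff {d : ℤ} {z : GaussianInt} :
    (d : GaussianInt) ∣ star z ↔ (d : GaussianInt) ∣ z := by
  simp [Zsqrtd.intCast_dvd]

lemma card_norm_eq_one : Nat.card {e : GaussianInt // e.norm = 1} = 4 := by
  have mem_iff (e : GaussianInt) :
      e.norm = 1 ↔ e ∈ ({⟨1, 0⟩, ⟨-1, 0⟩, ⟨0, 1⟩, ⟨0, -1⟩} : Finset GaussianInt) := by
    constructor
    · obtain ⟨a, b⟩ := e
      intro h
      simp only [norm_eq_re_sq_add_im_sq] at h
      obtain ⟨ha, ha'⟩ : -1 ≤ a ∧ a ≤ 1 := by constructor <;> nlinarith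
      obtain ⟨hb, hb'⟩ : -1 ≤ b ∧ b ≤ 1 := by constructor <;> nlinarith
      interval_cases a <;> interval_cases b <;> first | decide | simp at h
    · simp only [mem_insert, mem_singleton]
      rintro (rfl | rfl | rfl | rfl) <;> decide
  rw [Nat.card_congr (Equiv.subtypeEquivRight mem_iff), Nat.card_eq_fintype_card,
    Fintype.card_coe]
  decide

lemma card_norm_add_norm_eq_one :
    Nat.card {g : GaussianInt × GaussianInt // g.1.norm + g.2.norm = 1} = 8 := by
  let unitEquiv : {e : GaussianInt // e.norm = 1} × Bool ≃
      {g : GaussianInt × GaussianInt // g.1.norm + g.2.norm = 1} :=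
    Equiv.ofBijective
      (fun e => ⟨if e.2 then (e.1, 0) else (0, e.1), by cases h : e.2 <;> simp [e.1.2]⟩) <| by
    constructor
    · have norm_zero_ne_one : Zsqrtd.norm (0 : GaussianInt) ≠ 1 := by simp
      rintro ⟨⟨e, he⟩, _ | _⟩ ⟨⟨e', he'⟩, _ | _⟩ h <;>
        simp only [Subtype.mk.injEq, Prod.mk.injEq, Bool.false_eq_true, if_true, if_false] at h ⊢
          <;> grind
    · rintro ⟨⟨a, b⟩, hab⟩
      have ha := GaussianInt.norm_nonneg a
      have hb := GaussianInt.norm_nonneg b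
      dsimp only at hab
      rcases ha.eq_or_lt with ha0 | ha0
      · obtain rfl := GaussianInt.norm_eq_zero.1 ha0.symm
        exact ⟨(⟨b, by lia⟩, false), rfl⟩
      · obtain rfl := GaussianInt.norm_eq_zero.1 (by lia : b.norm = 0)
        exact ⟨(⟨a, by lia⟩, true), rfl⟩
  rw [← Nat.card_congr unitEquiv, Nat.card_prod, card_norm_eq_one]
  simp

lemma exists_eq_add_natCast_mul_two_mul_norm_le {q : ℕ} (hq : 0 < q) (w : GaussianInt) :
    ∃ r k : GaussianInt, w = r + q * k ∧ 2 * r.norm ≤ (q : ℤ) ^ 2 := by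
  have two_mul_bmod_sq_le (n : ℤ) : 4 * n.bmod q ^ 2 ≤ (q : ℤ) ^ 2 := by
    have := Int.le_bmod (x := n) hq
    have := Int.bmod_le (x := n) hq
    rw [show 4 * n.bmod q ^ 2 = (2 * n.bmod q) ^ 2 by ring]
    exact sq_le_sq' (by lia) (by lia)
  obtain ⟨k, hk⟩ : (q : ℤ) ∣ w.re - w.re.bmod q := Int.dvd_self_sub_bmod
  obtain ⟨l, hl⟩ : (q : ℤ) ∣ w.im - w.im.bmod q := Int.dvd_self_sub_bmod
  refine ⟨⟨w.re.bmod q, w.im.bmod q⟩, ⟨k, l⟩, ?_, ?_⟩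
  · ext <;> simp <;> linarith
  · rw [norm_eq_re_sq_add_im_sq]
    linarith [two_mul_bmod_sq_le w.re, two_mul_bmod_sq_le w.im]

lemma natCast_dvd_mul_star_add_one_iff {q : ℕ} {w : GaussianInt} :
    (q : GaussianInt) ∣ w * star w + 1 ↔ (q : ℤ) ∣ w.norm + 1 := by
  rw [← Zsqrtd.norm_eq_mul_conj, ← Zsqrtd.intCast_dvd_intCast (d := -1)]
  push_cast
  rfl

lemma norm_add_norm_eq_natCast_iff {α β : GaussianInt} {q : ℕ} :
    α.norm + β.norm = q ↔ α * star α + β * star β = q := by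
  rw [norm_add_norm_eq_iff, Int.cast_natCast]

/- A positive definite binary Hermitian form of determinant one over the Gaussian integers is the
Gram form of a basis of determinant one: reduce `w` modulo `q` and swap the two basis vectors. -/
lemma exists_det_one_gram (q : ℕ) : ∀ w : GaussianInt, 0 < q → (q : ℤ) ∣ w.norm + 1 →
    ∃ α β γ δ : GaussianInt, α * δ - β * γ = 1 ∧ α * star α + β * star β = q ∧
      star α * γ + star β * δ = w := by
  induction q using Nat.strong_induction_on with
  | _ q ih =>
    intro w hq hdvd
    rcases (by lia : q = 1 ∨ 2 ≤ q) with rfl | hq2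
    · exact ⟨1, 0, w, 1, by simp⟩
    obtain ⟨r, k, rfl, hr⟩ := exists_eq_add_natCast_mul_two_mul_norm_le hq w
    obtain ⟨t, ht⟩ : (q : ℤ) ∣ r.norm + 1 := by
      rw [← natCast_dvd_mul_star_add_one_iff] at hdvd ⊢
      convert dvd_sub hdvd
        (dvd_mul_right (q : GaussianInt) (r * star k + k * star r + q * k * star k)) using 1
      simp only [star_add, star_mul', star_natCast]
      ring
    have hr0 := GaussianInt.norm_nonneg r
    have ht0 : 0 < t := pos_of_mul_pos_right (by lia : 0 < (q : ℤ) * t) (by positivity)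
    have htq : t < q := by nlinarith
    lift t to ℕ using ht0.le
    obtain ⟨α, β, γ, δ, hdet, ht', hr'⟩ := ih t (mod_cast htq) (-star r) (mod_cast ht0)
      ⟨q, by rw [Zsqrtd.norm_neg, Zsqrtd.norm_conj, ht, mul_comm]⟩
    have hr'' : α * star γ + β * star δ = -r := by
      simpa [mul_comm] using congrArg star hr'
    have hγδ : γ * star γ + δ * star δ = q := by
      have hdet' : star α * star δ - star β * star γ = 1 := by simpa using congrArg star hdet
      have hnorm : r * star r + 1 = q * t := by
        rw [← Zsqrtd.norm_eq_mul_conj]; exact mod_cast ht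
      apply mul_left_cancel₀ (Nat.cast_ne_zero.2 (by lia) : (t : GaussianInt) ≠ 0)
      linear_combination hnorm - (γ * star γ + δ * star δ) * ht' + (α * star γ + β * star δ) * hr' -
        star r * hr'' + (star α * star δ - star β * star γ) * hdet + hdet'
    exact ⟨γ, δ, -α + k * γ, -β + k * δ, by linear_combination hdet, hγδ,
      by linear_combination -hr'' + k * hγδ⟩

end GaussianIntegers

section CoprimePairs

/-- The points over `R` of the affine conic `x ^ 2 + y ^ 2 = -1`. -/
abbrev Conic (R : Type*) [CommRing R] : Type _ := {w : R × R // w.1 ^ 2 + w.2 ^ 2 = -1}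

/-- Coprime pairs of Gaussian integers of total norm `q`, the spinors which parametrize the
primitive points with odd third coordinate on the sphere of radius `q`. -/
abbrev CoprimePair (q : ℕ) : Type :=
  {x : GaussianInt × GaussianInt // IsCoprime x.1 x.2 ∧ x.1.norm + x.2.norm = q}

/-- `w` is a slope of the pair `(α, β)` modulo `q` if `α w ≡ β̄` and `β w ≡ -ᾱ`. Residues of slopes
modulo `q` are points of `Conic (ZMod q)`. -/
def IsSlope (q : ℕ) (x : GaussianInt × GaussianInt) (w : GaussianInt) : Prop :=
  (q : GaussianInt) ∣ x.1 * w - star x.2 ∧ (q : GaussianInt) ∣ x.2 * w + star x.1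

/-- Reduction modulo `q` of the real and imaginary parts of a Gaussian integer. -/
def residue (q : ℕ) (w : GaussianInt) : ZMod q × ZMod q := (w.re, w.im)

/-- Left multiplication by the matrix `(a, b; -b̄, ā)`, which lies in `SU₂` when `g = (a, b)` has
total norm one, written on pairs. -/
def su2Mul (g x : GaussianInt × GaussianInt) : GaussianInt × GaussianInt :=
  (g.1 * x.1 + g.2 * x.2, -star g.2 * x.1 + star g.1 * x.2)

variable {q : ℕ}

lemma residue_eq_iff {w w' : GaussianInt} :
    residue q w = residue q w' ↔ (q : GaussianInt) ∣ w - w' := by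
  rw [← Int.cast_natCast, Zsqrtd.intCast_dvd, residue, residue, Prod.mk.injEq, eq_comm,
    ZMod.intCast_eq_intCast_iff_dvd_sub, eq_comm, ZMod.intCast_eq_intCast_iff_dvd_sub,
    Zsqrtd.re_sub, Zsqrtd.im_sub]

lemma residue_mem_conic_iff {w : GaussianInt} :
    (residue q w).1 ^ 2 + (residue q w).2 ^ 2 = -1 ↔ (q : ℤ) ∣ w.norm + 1 := by
  rw [← ZMod.intCast_zmod_eq_zero_iff_dvd, norm_eq_re_sq_add_im_sq, residue, ← sub_eq_zero,
    sub_neg_eq_add]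
  push_cast
  rfl

lemma residue_surjective : Function.Surjective (residue q) := by
  rintro ⟨a, b⟩
  obtain ⟨a, rfl⟩ := ZMod.intCast_surjective a
  obtain ⟨b, rfl⟩ := ZMod.intCast_surjective b
  exact ⟨⟨a, b⟩, rfl⟩

lemma CoprimePair.exists_isSlope (x : CoprimePair q) :
    ∃ w, IsSlope q x.1 w ∧ (q : ℤ) ∣ w.norm + 1 := by
  obtain ⟨⟨α, β⟩, ⟨s, t, hst⟩, hx⟩ := x
  rw [norm_add_norm_eq_natCast_iff] at hx
  dsimp only at hst hx
  set w := s * star β - t * star α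
  have hα : α * w - star β = q * -t := by linear_combination star β * hst - t * hx
  have hβ : β * w + star α = q * s := by linear_combination -star α * hst + s * hx
  refine ⟨w, ⟨⟨_, hα⟩, ⟨_, hβ⟩⟩, natCast_dvd_mul_star_add_one_iff.1
    ⟨s * (-t * star w + star s) + t * (s * star w + star t), ?_⟩⟩
  have hα' : star α * star w - β = q * -star t := by simpa using congrArg star hα
  have hβ' : star β * star w + α = q * star s := by simpa using congrArg star hβ
  linear_combination -(w * star w + 1) * hst + s * star w * hα + s * hβ' + t * star w * hβ - t * hα'

lemma IsSlope.natCast_dvd_sub {x : GaussianInt × GaussianInt} {w w' : GaussianInt}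
    (hx : IsCoprime x.1 x.2) (hw : IsSlope q x w) (hw' : IsSlope q x w') :
    (q : GaussianInt) ∣ w - w' := by
  obtain ⟨s, t, hst⟩ := hx
  convert dvd_add ((dvd_sub hw.1 hw'.1).mul_left s) ((dvd_sub hw.2 hw'.2).mul_left t) using 1
  linear_combination -(w - w') * hst

lemma IsSlope.of_natCast_dvd_sub {x : GaussianInt × GaussianInt} {w w' : GaussianInt}
    (hw : IsSlope q x w) (h : (q : GaussianInt) ∣ w' - w) : IsSlope q x w' := by
  constructor
  · convert dvd_add hw.1 (h.mul_left x.1) using 1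
    ring
  · convert dvd_add hw.2 (h.mul_left x.2) using 1
    ring

lemma exists_coprimePair_isSlope (hq : 0 < q) {w : GaussianInt} (hw : (q : ℤ) ∣ w.norm + 1) :
    ∃ x : CoprimePair q, IsSlope q x.1 w := by
  obtain ⟨α, β, γ, δ, hdet, hq', rfl⟩ := exists_det_one_gram q w hq hw
  refine ⟨⟨(α, β), ⟨δ, -γ, by linear_combination hdet⟩, norm_add_norm_eq_natCast_iff.2 hq'⟩,
    ⟨γ, ?_⟩, ⟨δ, ?_⟩⟩
  · linear_combination γ * hq' + star β * hdet
  · linear_combination δ * hq' - star α * hdet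

/-- The reduction modulo `q` of the slopes of a coprime pair. -/
noncomputable def CoprimePair.toConic (x : CoprimePair q) : Conic (ZMod q) :=
  ⟨residue q x.exists_isSlope.choose, residue_mem_conic_iff.2 x.exists_isSlope.choose_spec.2⟩

lemma CoprimePair.toConic_eq_iff {x : CoprimePair q} {y : Conic (ZMod q)} {w : GaussianInt}
    (hw : residue q w = y.1) : x.toConic = y ↔ IsSlope q x.1 w := by
  have hslope := x.exists_isSlope.choose_spec.1
  rw [Subtype.ext_iff, ← hw, toConic, residue_eq_iff]
  exact ⟨fun h => hslope.of_natCast_dvd_sub ((dvd_sub_comm ..).1 h), hslope.natCast_dvd_sub x.2.1⟩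

lemma CoprimePair.toConic_surjective (hq : 0 < q) :
    Function.Surjective (toConic : CoprimePair q → Conic (ZMod q)) := by
  intro y
  obtain ⟨w, hw⟩ := residue_surjective y.1
  obtain ⟨x, hx⟩ := exists_coprimePair_isSlope hq (residue_mem_conic_iff.1 (hw ▸ y.2))
  exact ⟨x, (toConic_eq_iff hw).2 hx⟩

lemma norm_su2Mul (g x : GaussianInt × GaussianInt) :
    (su2Mul g x).1.norm + (su2Mul g x).2.norm = (g.1.norm + g.2.norm) * (x.1.norm + x.2.norm) := by
  simp only [su2Mul, norm_eq_re_sq_add_im_sq, Zsqrtd.re_add, Zsqrtd.im_add, Zsqrtd.re_mul,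
    Zsqrtd.im_mul, Zsqrtd.re_neg, Zsqrtd.im_neg, Zsqrtd.re_star, Zsqrtd.im_star]
  ring

lemma IsSlope.rotate {x : GaussianInt × GaussianInt} {w : GaussianInt} (hw : IsSlope q x w)
    (g : GaussianInt × GaussianInt) : IsSlope q (su2Mul g x) w := by
  constructor
  · convert dvd_add (hw.1.mul_left g.1) (hw.2.mul_left g.2) using 1
    simp only [su2Mul, star_add, star_mul', star_star, star_neg]
    ring
  · convert dvd_add (hw.1.mul_left (-star g.2)) (hw.2.mul_left (star g.1)) using 1
    simp only [su2Mul, star_add, star_mul']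
    ring

lemma isCoprime_su2Mul {g x : GaussianInt × GaussianInt} (hg : g.1.norm + g.2.norm = 1)
    (hx : IsCoprime x.1 x.2) : IsCoprime (su2Mul g x).1 (su2Mul g x).2 := by
  obtain ⟨s, t, hst⟩ := hx
  rw [norm_add_norm_eq_iff, Int.cast_one] at hg
  refine ⟨s * star g.1 + t * star g.2, -s * g.2 + t * g.1, ?_⟩
  simp only [su2Mul]
  linear_combination (s * x.1 + t * x.2) * hg + hst

/-- The action of `SU₂` over the Gaussian integers on coprime pairs. -/
def CoprimePair.rotate (g : {g : GaussianInt × GaussianInt // g.1.norm + g.2.norm = 1})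
    (x : CoprimePair q) : CoprimePair q :=
  ⟨su2Mul g.1 x.1, isCoprime_su2Mul g.2 x.2.1, by rw [norm_su2Mul, g.2, one_mul, x.2.2]⟩

lemma CoprimePair.rotate_injective (hq : 0 < q) (x : CoprimePair q) :
    Function.Injective fun g => rotate g x := by
  have hq0 : (q : GaussianInt) ≠ 0 := Nat.cast_ne_zero.2 hq.ne'
  obtain ⟨⟨α, β⟩, _, hx⟩ := x
  rw [norm_add_norm_eq_natCast_iff] at hx
  rintro ⟨⟨a, b⟩, _⟩ ⟨⟨a', b'⟩, _⟩ h
  simp only [rotate, su2Mul, Subtype.mk.injEq, Prod.mk.injEq] at h ⊢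
  obtain ⟨hα, hβ⟩ := h
  have hβ' : -b * star α + a * star β = -b' * star α + a' * star β := by
    simpa using congrArg star hβ
  constructor <;> apply mul_left_cancel₀ hq0
  · linear_combination star α * hα + β * hβ' - (a - a') * hx
  · linear_combination star β * hα - α * hβ' - (b - b') * hx

lemma IsSlope.exists_rotate_eq (hq : 0 < q) {x x' : CoprimePair q} {w : GaussianInt}
    (hw : IsSlope q x.1 w) (hw' : IsSlope q x'.1 w) : ∃ g, CoprimePair.rotate g x = x' := by
  have hq0 : (q : GaussianInt) ≠ 0 := Nat.cast_ne_zero.2 hq.ne'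
  obtain ⟨⟨α, β⟩, _, hx⟩ := x
  obtain ⟨⟨α', β'⟩, _, hx'⟩ := x'
  have hx_star := norm_add_norm_eq_natCast_iff.1 hx
  dsimp only at hx hx' hx_star
  obtain ⟨a, ha⟩ : (q : GaussianInt) ∣ α' * star α + star β' * β := by
    convert dvd_sub (hw.2.mul_left α') (hw'.1.mul_left β) using 1
    ring
  obtain ⟨b, hb⟩ : (q : GaussianInt) ∣ α' * star β - α * star β' := by
    convert dvd_sub (hw'.1.mul_left α) (hw.1.mul_left α') using 1
    ring
  have ha' : star α' * α + β' * star β = q * star a := by simpa using congrArg star ha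
  have hb' : star α' * β - star α * β' = q * star b := by simpa using congrArg star hb
  have hα : a * α + b * β = α' := by
    apply mul_left_cancel₀ hq0
    linear_combination -α * ha - β * hb + α' * hx_star
  have hβ : -star b * α + star a * β = β' := by
    apply mul_left_cancel₀ hq0
    linear_combination α * hb' - β * ha' + β' * hx_star
  have hab : a.norm + b.norm = 1 := by
    have h := norm_su2Mul (a, b) (α, β)
    simp only [su2Mul, hα, hβ, hx, hx'] at h
    exact (mul_eq_right₀ (Nat.cast_ne_zero.2 hq.ne')).1 h.symm
  exact ⟨⟨(a, b), hab⟩, Subtype.ext (Prod.ext hα hβ)⟩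

theorem CoprimePair.card_eq (hq : 0 < q) :
    Nat.card (CoprimePair q) = Nat.card (Conic (ZMod q)) * 8 := by
  rw [← card_norm_add_norm_eq_one]
  refine card_eq_mul_of_simplyTransitive_on_fibers rotate (toConic_surjective hq)
    (rotate_injective hq) fun x x' => ?_
  obtain ⟨w, hw⟩ := residue_surjective x.toConic.1
  have hx : IsSlope q x.1 w := (toConic_eq_iff hw).1 rfl
  rw [eq_comm, toConic_eq_iff hw]
  refine ⟨fun hx' => hx.exists_rotate_eq hq hx', ?_⟩
  rintro ⟨g, rfl⟩
  exact hx.rotate g.1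

end CoprimePairs

section PrimitivePoints

variable {ι : Type*} [Fintype ι] {q : ℕ}

/-- `x / q` is a rational point of the unit sphere, written in lowest terms. -/
def IsPrimitivePoint (q : ℕ) (x : ι → ℤ) : Prop :=
  ∑ i, x i ^ 2 = (q : ℤ) ^ 2 ∧ ∀ d : ℤ, (∀ i, d ∣ x i) → d ∣ q → IsUnit d

lemma isPrimitivePoint_comp_equiv {ι' : Type*} [Fintype ι'] (e : ι' ≃ ι) {x : ι → ℤ} :
    IsPrimitivePoint q (x ∘ e) ↔ IsPrimitivePoint q x := by
  simp only [IsPrimitivePoint, Function.comp_apply, Equiv.sum_comp e fun i => x i ^ 2,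
    e.forall_congr_left, Equiv.apply_symm_apply]

lemma sum_sq_modEq_card_odd (x : ι → ℤ) :
    ∑ i, x i ^ 2 ≡ (#{i | Odd (x i)} : ℤ) [ZMOD 4] := by
  rw [card_filter, Nat.cast_sum]
  refine Int.ModEq.sum fun i _ => ?_
  split_ifs with h
  · exact Int.sq_mod_four_eq_one_of_odd h
  · obtain ⟨k, hk⟩ := Int.not_odd_iff_even.1 h
    exact Int.modEq_zero_iff_dvd.2 ⟨k ^ 2, by rw [hk]; ring⟩

lemma IsPrimitivePoint.odd_and_card_odd_eq_one (hι : Fintype.card ι ≤ 3) {x : ι → ℤ}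
    (hx : IsPrimitivePoint q x) : Odd q ∧ #{i | Odd (x i)} = 1 := by
  have hcard : #{i | Odd (x i)} ≤ 3 := (card_le_univ _).trans hι
  have hmod : (q : ℤ) ^ 2 % 4 = (#{i | Odd (x i)} : ℤ) % 4 := hx.1 ▸ sum_sq_modEq_card_odd x
  rcases Nat.even_or_odd q with heven | hodd
  · have hq4 : (q : ℤ) ^ 2 % 4 = 0 := by
      obtain ⟨k, rfl⟩ := heven
      exact Int.emod_eq_zero_of_dvd ⟨(k : ℤ) ^ 2, by push_cast; ring⟩
    have hzero : #{i | Odd (x i)} = 0 := by lia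
    have h2 : IsUnit (2 : ℤ) := by
      refine hx.2 2 (fun i => ?_) (mod_cast heven.two_dvd)
      have : ¬Odd (x i) := filter_eq_empty_iff.1 (card_eq_zero.1 hzero) (mem_univ i)
      exact (Int.not_odd_iff_even.1 this).two_dvd
    norm_num [Int.isUnit_iff] at h2
  · rw [Int.sq_mod_four_eq_one_of_odd (mod_cast hodd)] at hmod
    exact ⟨hodd, by lia⟩

lemma IsPrimitivePoint.existsUnique_odd (hι : Fintype.card ι ≤ 3) {x : ι → ℤ}
    (hx : IsPrimitivePoint q x) : ∃! i, Odd (x i) := by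
  obtain ⟨i, hi⟩ := card_eq_one.1 (hx.odd_and_card_odd_eq_one hι).2
  simp only [Finset.ext_iff, mem_filter, mem_univ, true_and, mem_singleton] at hi
  exact ⟨i, (hi i).2 rfl, fun j => (hi j).1⟩

instance finite_primitivePoint : Finite {x : ι → ℤ // IsPrimitivePoint q x} := by
  classical
  refine Set.Finite.subset (Fintype.piFinset fun _ : ι => Icc (-(q : ℤ)) q).finite_toSet
    fun x hx => ?_
  simp only [mem_coe, Fintype.mem_piFinset, mem_Icc, ← abs_le]
  refine fun i => abs_le_of_sq_le_sq ?_ (Nat.cast_nonneg q)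
  exact (single_le_sum (fun j _ => sq_nonneg (x j)) (mem_univ i)).trans_eq hx.1

lemma card_odd_at_eq (i j : ι) :
    Nat.card {x : ι → ℤ // IsPrimitivePoint q x ∧ Odd (x i)} =
      Nat.card {x : ι → ℤ // IsPrimitivePoint q x ∧ Odd (x j)} := by
  classical
  refine Nat.card_congr <| ((Equiv.swap i j).arrowCongr (Equiv.refl ℤ)).subtypeEquiv fun x => ?_
  refine and_congr (isPrimitivePoint_comp_equiv (Equiv.swap i j).symm).symm ?_
  simp

lemma card_primitivePoint_eq_mul_card_odd_at (hι : Fintype.card ι ≤ 3) (i : ι) :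
    Nat.card {x : ι → ℤ // IsPrimitivePoint q x} =
      Fintype.card ι * Nat.card {x : ι → ℤ // IsPrimitivePoint q x ∧ Odd (x i)} := by
  rw [← Nat.card_eq_fintype_card]
  have hodd (x : {x : ι → ℤ // IsPrimitivePoint q x}) := x.2.existsUnique_odd hι
  choose oddIndex hoddIndex huniq using hodd
  refine card_eq_mul_of_card_fiber oddIndex _ fun j => ?_
  rw [card_odd_at_eq i j, ← Nat.card_congr (Equiv.subtypeSubtypeEquivSubtypeInter _ _)]
  refine Nat.card_congr (Equiv.subtypeEquivRight fun x => ⟨?_, fun h => (huniq x j h).symm⟩)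
  rintro rfl
  exact hoddIndex x

end PrimitivePoints

section HopfMap

variable {q : ℕ}

/-- The integral Hopf map `(α, β) ↦ (2αβ̄, |α|² - |β|²)` from pairs of Gaussian integers to
`ℂ × ℝ = ℝ³`. -/
def hopf (x : GaussianInt × GaussianInt) : Fin 3 → ℤ :=
  ![2 * (x.1 * star x.2).re, 2 * (x.1 * star x.2).im, x.1.norm - x.2.norm]

lemma sum_hopf_sq (x : GaussianInt × GaussianInt) :
    ∑ i, hopf x i ^ 2 = (x.1.norm + x.2.norm) ^ 2 := by
  have h : (x.1 * star x.2).re ^ 2 + (x.1 * star x.2).im ^ 2 = x.1.norm * x.2.norm := by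
    rw [← norm_eq_re_sq_add_im_sq, Zsqrtd.norm_mul, Zsqrtd.norm_conj]
  simp only [hopf, Fin.sum_univ_three, Matrix.cons_val]
  linear_combination 4 * h

lemma isUnit_of_dvd_norm_of_dvd_mul_star {α β : GaussianInt} {d : ℤ} (hαβ : IsCoprime α β)
    (hα : d ∣ α.norm) (hβ : d ∣ β.norm) (h : (d : GaussianInt) ∣ α * star β) : IsUnit d := by
  obtain ⟨s, t, hst⟩ := hαβ
  rw [← Zsqrtd.intCast_dvd_intCast (d := -1), Zsqrtd.norm_eq_mul_conj] at hα hβ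
  have h' : (d : GaussianInt) ∣ β * star α := by
    rw [← intCast_dvd_star_iff, star_mul', star_star, mul_comm]
    exact h
  have hst' : star s * star α + star t * star β = 1 := by simpa using congrArg star hst
  refine isUnit_of_dvd_one ((Zsqrtd.intCast_dvd_intCast (d := -1) _ _).1 ?_)
  convert dvd_add (dvd_add (hα.mul_left (s * star s)) (h.mul_left (s * star t)))
    (dvd_add (h'.mul_left (t * star s)) (hβ.mul_left (t * star t))) using 1
  rw [Int.cast_one]
  linear_combination -(star s * star α + star t * star β) * hst - hst'

lemma isPrimitivePoint_hopf (hq : Odd q) (x : CoprimePair q) : IsPrimitivePoint q (hopf x.1) := by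
  obtain ⟨⟨α, β⟩, hcop, hx⟩ := x
  dsimp only at hcop hx
  refine ⟨by rw [sum_hopf_sq, hx], fun d hd hdq => ?_⟩
  have hd2 : IsCoprime d 2 := by
    have hq2 : IsCoprime (q : ℤ) 2 := Nat.isCoprime_iff_coprime.2 hq.coprime_two_right
    exact hq2.of_isCoprime_of_dvd_left hdq
  have hre : d ∣ (α * star β).re := hd2.dvd_of_dvd_mul_left (hd 0)
  have him : d ∣ (α * star β).im := hd2.dvd_of_dvd_mul_left (hd 1)
  have hsub : d ∣ α.norm - β.norm := hd 2
  have hα : d ∣ α.norm := hd2.dvd_of_dvd_mul_left <| by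
    convert dvd_add hdq hsub using 1
    linear_combination hx
  have hβ : d ∣ β.norm := (dvd_sub_right hα).1 hsub
  exact isUnit_of_dvd_norm_of_dvd_mul_star hcop hα hβ ((Zsqrtd.intCast_dvd _ _).2 ⟨hre, him⟩)

lemma odd_hopf_two (hq : Odd q) (x : CoprimePair q) : Odd (hopf x.1 2) := by
  have h : hopf x.1 2 = q - 2 * x.1.2.norm := by
    simp only [hopf, Matrix.cons_val]
    linear_combination x.2.2
  rw [h]
  exact Odd.sub_even (mod_cast hq) (even_two_mul _)

/- If `g` is a greatest common divisor of `u` and `z`, then `u` divides the norm of `g`; the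
quotient is `k`. -/
lemma exists_eq_intCast_mul_star_mul {u v : ℤ} {z : GaussianInt} (hu : u ≠ 0)
    (hz : z.norm = u * v) : ∃ (k : ℤ) (s t : GaussianInt),
      IsCoprime s t ∧ u = k * s.norm ∧ v = k * t.norm ∧ z = k * (star s * t) := by
  obtain ⟨g, s, t, x, y, hs, ht, hg⟩ : ∃ g s t x y : GaussianInt,
      u = g * s ∧ z = g * t ∧ g = u * x + z * y := by
    obtain ⟨s, hs⟩ := EuclideanDomain.gcd_dvd_left (u : GaussianInt) z
    obtain ⟨t, ht⟩ := EuclideanDomain.gcd_dvd_right (u : GaussianInt) z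
    exact ⟨_, s, t, _, _, hs, ht, EuclideanDomain.gcd_eq_gcd_ab _ _⟩
  have hg0 : g ≠ 0 := by
    rintro rfl
    exact hu (Int.cast_eq_zero.1 (by rw [hs, zero_mul]))
  have hst : x * s + y * t = 1 := by
    apply mul_left_cancel₀ hg0
    linear_combination -hg - x * hs - y * ht
  obtain ⟨k, hk⟩ : u ∣ g.norm := by
    have hg' : star g = u * star x + star z * star y := by simpa using congrArg star hg
    have hz' : z * star z = u * v := by
      rw [← Zsqrtd.norm_eq_mul_conj, hz, Int.cast_mul]
    rw [← Zsqrtd.intCast_dvd_intCast (d := -1), Zsqrtd.norm_eq_mul_conj]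
    exact ⟨x * star g + z * y * star x + v * y * star y, by
      linear_combination star g * hg + z * y * hg' + y * star y * hz'⟩
  have hgs : star g = k * s := by
    apply mul_left_cancel₀ hg0
    rw [← Zsqrtd.norm_eq_mul_conj, hk, Int.cast_mul, hs]
    ring
  have hg_eq : g = k * star s := by simpa using congrArg star hgs
  have hk0 : k ≠ 0 := by
    rintro rfl
    exact hg0 (by rw [hg_eq, Int.cast_zero, zero_mul])
  refine ⟨k, s, t, ⟨x, y, hst⟩, mul_left_cancel₀ hk0 ?_, mul_left_cancel₀ hu ?_, ?_⟩
  · rw [mul_comm, ← hk, hg_eq, Zsqrtd.norm_mul, Zsqrtd.norm_intCast, Zsqrtd.norm_conj, mul_assoc]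
  · rw [← hz, ht, Zsqrtd.norm_mul, hk, mul_assoc]
  · rw [ht, hg_eq, mul_assoc]

lemma exists_isCoprime_mul_star_eq {u v : ℤ} {z : GaussianInt} (hu : 0 ≤ u) (hv : 0 ≤ v)
    (hz : z.norm = u * v) (hprim : ∀ d : ℤ, (d : GaussianInt) ∣ z → d ∣ u → d ∣ v → IsUnit d) :
    ∃ α β : GaussianInt, IsCoprime α β ∧ α.norm = u ∧ β.norm = v ∧ α * star β = z := by
  rcases hu.eq_or_lt with rfl | hu
  · obtain rfl : z = 0 := GaussianInt.norm_eq_zero.1 (by rw [hz, zero_mul])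
    obtain rfl : v = 1 := by
      have := Int.isUnit_iff.1 (hprim v (dvd_zero _) (dvd_zero _) dvd_rfl)
      lia
    exact ⟨0, 1, isCoprime_one_right, by simp⟩
  obtain ⟨k, s, t, hst, hu_eq, hv_eq, hz_eq⟩ := exists_eq_intCast_mul_star_mul hu.ne' hz
  obtain rfl : k = 1 := by
    have := GaussianInt.norm_nonneg s
    rcases Int.isUnit_iff.1 (hprim k ⟨_, hz_eq⟩ ⟨_, hu_eq⟩ ⟨_, hv_eq⟩) with h | rfl
    · exact h
    · lia
  rw [one_mul] at hu_eq hv_eq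
  rw [Int.cast_one, one_mul] at hz_eq
  exact ⟨star s, star t, hst.map (starRingEnd GaussianInt), by rw [Zsqrtd.norm_conj, hu_eq],
    by rw [Zsqrtd.norm_conj, hv_eq], by rw [star_star, hz_eq]⟩

/-- The Hopf map, from coprime pairs to primitive points with odd third coordinate. -/
def CoprimePair.toPoint (hq : Odd q) (x : CoprimePair q) :
    {x : Fin 3 → ℤ // IsPrimitivePoint q x ∧ Odd (x 2)} :=
  ⟨hopf x.1, isPrimitivePoint_hopf hq x, odd_hopf_two hq x⟩

lemma CoprimePair.toPoint_surjective (hq : Odd q) : Function.Surjective (toPoint hq) := by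
  rintro ⟨y, hy, h2⟩
  have heven {i : Fin 3} (hi : i ≠ 2) : Even (y i) :=
    Int.not_odd_iff_even.1 fun h => hi ((hy.existsUnique_odd (by simp)).unique h h2)
  obtain ⟨a, ha⟩ := (heven (i := 0) (by decide)).two_dvd
  obtain ⟨b, hb⟩ := (heven (i := 1) (by decide)).two_dvd
  obtain ⟨u, hu⟩ := (Odd.add_odd (mod_cast hq : Odd (q : ℤ)) h2).two_dvd
  obtain ⟨v, hv⟩ := (Odd.sub_odd (mod_cast hq : Odd (q : ℤ)) h2).two_dvd
  have hsum : y 0 ^ 2 + y 1 ^ 2 + y 2 ^ 2 = (q : ℤ) ^ 2 := by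
    rw [← hy.1, Fin.sum_univ_three]
  obtain ⟨hle, hle'⟩ : -(q : ℤ) ≤ y 2 ∧ y 2 ≤ q :=
    abs_le.1 (abs_le_of_sq_le_sq (by nlinarith) (Nat.cast_nonneg q))
  have hnorm : Zsqrtd.norm (⟨a, b⟩ : GaussianInt) = u * v := by
    simp only [norm_eq_re_sq_add_im_sq]
    rw [ha, hb] at hsum
    have : ((q : ℤ) + y 2) * (q - y 2) = (2 * u) * (2 * v) := by rw [hu, hv]
    linarith
  obtain ⟨α, β, hcop, hα, hβ, hαβ⟩ := exists_isCoprime_mul_star_eq (by lia) (by lia) hnorm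
    fun d hd hdu hdv => by
      obtain ⟨hda, hdb⟩ := (Zsqrtd.intCast_dvd _ _).1 hd
      refine hy.2 d (fun i => ?_) ?_
      · fin_cases i
        · exact ha ▸ hda.mul_left 2
        · exact hb ▸ hdb.mul_left 2
        · exact (by lia : y 2 = u - v) ▸ dvd_sub hdu hdv
      · exact (by lia : (q : ℤ) = u + v) ▸ dvd_add hdu hdv
  refine ⟨⟨(α, β), hcop, by lia⟩, Subtype.ext (funext fun i => ?_)⟩
  simp only [toPoint, hopf, hα, hβ, hαβ]
  fin_cases i
  · exact ha.symm
  · exact hb.symm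
  · exact (by lia : u - v = y 2)

/-- The action of the Gaussian units on coprime pairs, whose orbits are the fibres of the Hopf
map. -/
def CoprimePair.scale (e : {e : GaussianInt // e.norm = 1}) (x : CoprimePair q) : CoprimePair q :=
  ⟨(e.1 * x.1.1, e.1 * x.1.2), by
    have he : IsUnit e.1 := Zsqrtd.norm_eq_one_iff.1 (by rw [e.2]; rfl)
    exact (isCoprime_mul_unit_left he _ _).2 x.2.1, by
    rw [Zsqrtd.norm_mul, Zsqrtd.norm_mul, e.2, one_mul, one_mul, x.2.2]⟩

lemma CoprimePair.scale_injective (x : CoprimePair q) :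
    Function.Injective fun e => scale e x := by
  obtain ⟨s, t, hst⟩ := x.2.1
  rintro ⟨e, _⟩ ⟨e', _⟩ h
  simp only [scale, Subtype.mk.injEq, Prod.mk.injEq] at h ⊢
  linear_combination s * h.1 + t * h.2 - (e - e') * hst

lemma hopf_mul_left {e : GaussianInt} (he : e.norm = 1) (x : GaussianInt × GaussianInt) :
    hopf (e * x.1, e * x.2) = hopf x := by
  have he' : e * star e = 1 := by rw [← Zsqrtd.norm_eq_mul_conj, he, Int.cast_one]
  have h : e * x.1 * star (e * x.2) = x.1 * star x.2 := by
    rw [star_mul']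
    linear_combination x.1 * star x.2 * he'
  simp only [hopf, h, Zsqrtd.norm_mul, he, one_mul]

lemma CoprimePair.exists_scale_eq_of_hopf_eq (hq : 0 < q) {x y : CoprimePair q}
    (h : hopf x.1 = hopf y.1) : ∃ e, scale e x = y := by
  have hq0 : (q : GaussianInt) ≠ 0 := Nat.cast_ne_zero.2 hq.ne'
  obtain ⟨⟨α, β⟩, ⟨s, t, hst⟩, hx⟩ := x
  obtain ⟨⟨α', β'⟩, _, hy⟩ := y
  dsimp only at h hst hx hy
  have h0 : 2 * (α * star β).re = 2 * (α' * star β').re := congrFun h 0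
  have h1 : 2 * (α * star β).im = 2 * (α' * star β').im := congrFun h 1
  have h2 : α.norm - β.norm = α'.norm - β'.norm := congrFun h 2
  have hstar : α * star β = α' * star β' := Zsqrtd.ext (by lia) (by lia)
  have hstar' : star α * β = star α' * β' := by simpa using congrArg star hstar
  have hα : α * star α = α' * star α' := by
    rw [← Zsqrtd.norm_eq_mul_conj, ← Zsqrtd.norm_eq_mul_conj, (by lia : α.norm = α'.norm)]
  have hβ : β * star β = β' * star β' := by
    rw [← Zsqrtd.norm_eq_mul_conj, ← Zsqrtd.norm_eq_mul_conj, (by lia : β.norm = β'.norm)]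
  have hcross : α * β' = α' * β := by
    apply mul_left_cancel₀ hq0
    rw [← norm_add_norm_eq_natCast_iff.1 hx]
    linear_combination α * β' * hα - α * α' * hstar' + β * β' * hstar - β * α' * hβ
  obtain ⟨e, rfl, rfl⟩ : ∃ e, e * α = α' ∧ e * β = β' :=
    ⟨s * α' + t * β', by linear_combination α' * hst + t * hcross,
      by linear_combination β' * hst - s * hcross⟩
  rw [Zsqrtd.norm_mul, Zsqrtd.norm_mul, ← mul_add, hx] at hy
  exact ⟨⟨e, (mul_eq_right₀ (Nat.cast_ne_zero.2 hq.ne')).1 hy⟩, rfl⟩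

theorem CoprimePair.card_eq_mul_card_odd_point (hq : Odd q) :
    Nat.card (CoprimePair q) =
      Nat.card {x : Fin 3 → ℤ // IsPrimitivePoint q x ∧ Odd (x 2)} * 4 := by
  rw [← card_norm_eq_one]
  refine card_eq_mul_of_simplyTransitive_on_fibers scale (toPoint_surjective hq) scale_injective
    fun x y => ⟨fun h => exists_scale_eq_of_hopf_eq hq.pos (congrArg Subtype.val h), ?_⟩
  rintro ⟨e, rfl⟩
  exact Subtype.ext (hopf_mul_left e.2 x.1).symm

end HopfMap

section ConicCount

lemma card_conic_congr {R S : Type*} [CommRing R] [CommRing S] (e : R ≃+* S) :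
    Nat.card (Conic R) = Nat.card (Conic S) := by
  refine Nat.card_congr ((e.toEquiv.prodCongr e.toEquiv).subtypeEquiv fun w => ?_)
  rw [← e.injective.eq_iff]
  simp

lemma card_conic_prod (R S : Type*) [CommRing R] [CommRing S] :
    Nat.card (Conic (R × S)) = Nat.card (Conic R) * Nat.card (Conic S) := by
  rw [← Nat.card_prod]
  exact Nat.card_congr
    { toFun w := (⟨(w.1.1.1, w.1.2.1), congrArg Prod.fst w.2⟩,
        ⟨(w.1.1.2, w.1.2.2), congrArg Prod.snd w.2⟩)
      invFun w := ⟨((w.1.1.1, w.2.1.1), (w.1.1.2, w.2.1.2)), Prod.ext w.1.2 w.2.2⟩ }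

lemma card_conic_zmod_mul {m n : ℕ} (h : m.Coprime n) :
    Nat.card (Conic (ZMod (m * n))) = Nat.card (Conic (ZMod m)) * Nat.card (Conic (ZMod n)) :=
  (card_conic_congr (ZMod.chineseRemainder h)).trans (card_conic_prod _ _)

section Hensel

variable {R S : Type*} [CommRing R] [CommRing S] {f : R →+* S}

lemma existsUnique_sq_eq_of_map_sq_eq [IsLocalHom f] (hf : Function.Surjective f)
    (hker : ∀ a, f a = 0 → a ^ 2 = 0) (h2 : IsUnit (2 : R)) {s : S} (hs : IsUnit s) {c : R}
    (hc : s ^ 2 = f c) : ∃! x, f x = s ∧ x ^ 2 = c := by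
  obtain ⟨x₀, rfl⟩ := hf s
  obtain ⟨u, hu⟩ := (h2.mul (isUnit_of_map_unit f x₀ hs)).exists_right_inv
  have he : f (x₀ ^ 2 - c) = 0 := by rw [map_sub, map_pow, hc, sub_self]
  refine ⟨x₀ - (x₀ ^ 2 - c) * u, ⟨by simp only [map_sub f x₀, map_mul, he, zero_mul, sub_zero], ?_⟩,
    fun y hy => ?_⟩
  · linear_combination -(x₀ ^ 2 - c) * hu + u ^ 2 * hker _ he
  · set x := x₀ - (x₀ ^ 2 - c) * u
    have hx : f x = f x₀ := by simp only [x, map_sub f x₀, map_mul, he, zero_mul, sub_zero]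
    have hyx : IsUnit (y + x) := isUnit_of_map_unit f _ <| by
      rw [map_add, hy.1, hx, ← two_mul, ← map_ofNat f 2]
      exact (h2.map f).mul hs
    refine sub_eq_zero.1 (hyx.mul_left_eq_zero.1 ?_)
    have hx' : x ^ 2 = c := by linear_combination -(x₀ ^ 2 - c) * hu + u ^ 2 * hker _ he
    linear_combination hy.2 - hx'

/-- The map induced on points by a ring homomorphism. -/
def Conic.map (f : R →+* S) (w : Conic R) : Conic S :=
  ⟨(f w.1.1, f w.1.2), by rw [← map_pow, ← map_pow, ← map_add, w.2, map_neg, map_one]⟩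

/-- The symmetry of the conic which exchanges the coordinates. -/
def Conic.swap : Conic R ≃ Conic R :=
  (Equiv.prodComm R R).subtypeEquiv fun _ => by rw [add_comm]; rfl

lemma card_fiber_eq_card_ker (hf : Function.Surjective f) (t : S) :
    Nat.card {b // f b = t} = Nat.card (RingHom.ker f) :=
  Nat.card_congr (AddMonoidHom.fiberEquivKerOfSurjective (f := f.toAddMonoidHom) hf t)

lemma Conic.card_fiber_map_of_isUnit_fst [IsLocalHom f] (hf : Function.Surjective f)
    (hker : ∀ a, f a = 0 → a ^ 2 = 0) (h2 : IsUnit (2 : R)) {y : Conic S} (hy : IsUnit y.1.1) :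
    Nat.card {x // map f x = y} = Nat.card (RingHom.ker f) := by
  rw [← card_fiber_eq_card_ker hf y.1.2]
  have hlift {b : R} (hb : f b = y.1.2) : ∃! a, f a = y.1.1 ∧ a ^ 2 = -1 - b ^ 2 := by
    refine existsUnique_sq_eq_of_map_sq_eq hf hker h2 hy ?_
    rw [map_sub, map_neg, map_one, map_pow, hb]
    exact eq_sub_of_add_eq y.2
  refine Nat.card_eq_of_bijective
    (fun x : {x // map f x = y} => (⟨x.1.1.2, congrArg (·.1.2) x.2⟩ : {b // f b = y.1.2})) ⟨?_, ?_⟩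
  · rintro ⟨⟨⟨a, b⟩, hab⟩, rfl⟩ ⟨⟨⟨a', b'⟩, hab'⟩, hx'⟩ h
    obtain rfl : b = b' := congrArg Subtype.val h
    obtain rfl : a = a' := (hlift rfl).unique ⟨rfl, eq_sub_of_add_eq hab⟩
      ⟨congrArg (·.1.1) hx', eq_sub_of_add_eq hab'⟩
    rfl
  · rintro ⟨b, hb⟩
    obtain ⟨a, ⟨ha, ha'⟩, -⟩ := hlift hb
    exact ⟨⟨⟨(a, b), add_eq_of_eq_sub ha'⟩, Subtype.ext (Prod.ext ha hb)⟩, rfl⟩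

lemma Conic.isUnit_fst_or_isUnit_snd [IsLocalRing S] (y : Conic S) :
    IsUnit y.1.1 ∨ IsUnit y.1.2 := by
  have h : IsUnit (y.1.1 ^ 2 + y.1.2 ^ 2) := by
    rw [y.2]
    exact isUnit_one.neg
  simpa only [isUnit_pow_iff two_ne_zero] using IsLocalRing.isUnit_or_isUnit_of_isUnit_add h

lemma card_conic_eq_mul_card_ker [IsLocalRing R] [IsLocalRing S] (hf : Function.Surjective f)
    (hker : ∀ a, f a = 0 → a ^ 2 = 0) (h2 : IsUnit (2 : R)) :
    Nat.card (Conic R) = Nat.card (Conic S) * Nat.card (RingHom.ker f) := by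
  have : IsLocalHom f := .of_surjective f hf
  refine card_eq_mul_of_card_fiber (Conic.map f) _ fun y => ?_
  rcases y.isUnit_fst_or_isUnit_snd with hy | hy
  · exact Conic.card_fiber_map_of_isUnit_fst hf hker h2 hy
  · rw [← Conic.card_fiber_map_of_isUnit_fst hf hker h2 (y := Conic.swap y) hy]
    refine Nat.card_congr (Conic.swap.subtypeEquiv fun x => ?_)
    rw [← Conic.swap.injective.eq_iff]
    rfl

end Hensel

lemma isLocalRing_zmod_prime_pow_succ (p k : ℕ) [hp : Fact p.Prime] :
    IsLocalRing (ZMod (p ^ (k + 1))) :=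
  have : Fact (1 < p ^ (k + 1)) := ⟨Nat.one_lt_pow k.succ_ne_zero hp.out.one_lt⟩
  .of_surjective' (PadicInt.toZModPow (k + 1)) (ZMod.ringHom_surjective _)

lemma card_conic_zmod_prime_pow_add_two {p : ℕ} [hp : Fact p.Prime] (hp2 : p ≠ 2) (k : ℕ) :
    Nat.card (Conic (ZMod (p ^ (k + 2)))) = Nat.card (Conic (ZMod (p ^ (k + 1)))) * p := by
  have (i : ℕ) : NeZero (p ^ i) := ⟨pow_ne_zero i hp.out.ne_zero⟩
  have := isLocalRing_zmod_prime_pow_succ p k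
  have := isLocalRing_zmod_prime_pow_succ p (k + 1)
  set f := ZMod.castHom (pow_dvd_pow p (k + 1).le_succ) (ZMod (p ^ (k + 1)))
  have hf : Function.Surjective f := ZMod.ringHom_surjective f
  have hker : ∀ a, f a = 0 → a ^ 2 = 0 := by
    intro a ha
    obtain ⟨a, rfl⟩ := ZMod.natCast_zmod_surjective a
    rw [map_natCast, ZMod.natCast_eq_zero_iff] at ha
    rw [← Nat.cast_pow, ZMod.natCast_eq_zero_iff]
    calc p ^ (k + 2) ∣ (p ^ (k + 1)) ^ 2 := by rw [← pow_mul]; exact pow_dvd_pow p (by lia)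
      _ ∣ a ^ 2 := pow_dvd_pow_of_dvd ha 2
  have h2 : IsUnit (2 : ZMod (p ^ (k + 2))) := by
    refine (ZMod.isUnit_iff_coprime 2 _).2 ?_
    exact ((Nat.coprime_primes Nat.prime_two hp.out).2 hp2.symm).pow_right _
  have hcard : p ^ (k + 2) = p ^ (k + 1) * Nat.card (RingHom.ker f) := by
    simpa only [Nat.card_zmod] using card_eq_mul_of_card_fiber f _ (card_fiber_eq_card_ker hf)
  rw [card_conic_eq_mul_card_ker hf hker h2,
    ← Nat.eq_of_mul_eq_mul_left (Nat.pos_of_neZero _) ((pow_succ p (k + 1)).symm.trans hcard)]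

section FiniteField

variable {F : Type*} [Field F] [Fintype F]

lemma card_filter_sq_eq [DecidableEq F] (hF : ringChar F ≠ 2) (a : F) :
    (#{x : F | x ^ 2 = a} : ℤ) = quadraticChar F a + 1 := by
  rw [← quadraticChar_card_sqrts hF a]
  congr 2
  ext x
  simp

lemma sum_sq_eq_sum_quadraticChar [DecidableEq F] (hF : ringChar F ≠ 2) (g : F → ℤ) :
    ∑ y, g (y ^ 2) = ∑ a, (quadraticChar F a + 1) * g a := by
  simp_rw [← card_filter_sq_eq hF, ← nsmul_eq_mul, ← sum_const]
  exact (sum_fiberwise' univ (· ^ 2) g).symm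

lemma sum_quadraticChar_mul_quadraticChar_neg_one_sub [DecidableEq F] (hF : ringChar F ≠ 2) :
    ∑ a, quadraticChar F a * quadraticChar F (-1 - a) = -quadraticChar F (-1) := by
  have hJ := jacobiSum_nontrivial_inv (quadraticChar_ne_one hF)
  rw [(quadraticChar_isQuadratic F).inv, jacobiSum, ← Equiv.sum_comp (Equiv.neg F)] at hJ
  rw [← hJ]
  refine sum_congr rfl fun a _ => ?_
  rw [Equiv.neg_apply, ← map_mul, ← map_mul]
  congr 1
  ring

lemma card_conic_eq_sum [DecidableEq F] (hF : ringChar F ≠ 2) :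
    (Nat.card (Conic F) : ℤ) = ∑ y : F, (quadraticChar F (-1 - y ^ 2) + 1) := by
  rw [Nat.card_eq_fintype_card, Fintype.card_subtype, card_filter, ← univ_product_univ,
    sum_product_right]
  push_cast
  simp_rw [← card_filter_sq_eq hF, card_filter, eq_sub_iff_add_eq]
  push_cast
  rfl

lemma card_conic_of_ringChar_ne_two (hF : ringChar F ≠ 2) :
    (Nat.card (Conic F) : ℤ) = Fintype.card F - ZMod.χ₄ (Fintype.card F) := by
  classical
  have hsum : ∑ a, quadraticChar F (-1 - a) = 0 :=
    (Equiv.sum_comp (Equiv.subLeft (-1 : F)) _).trans (quadraticChar_sum_zero hF)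
  calc (Nat.card (Conic F) : ℤ)
      = ∑ a, quadraticChar F a * quadraticChar F (-1 - a) + ∑ a, quadraticChar F (-1 - a)
          + Fintype.card F := by
        rw [card_conic_eq_sum hF, sum_add_distrib,
          sum_sq_eq_sum_quadraticChar hF fun a => quadraticChar F (-1 - a), ← sum_add_distrib]
        simp only [add_mul, one_mul, sum_add_distrib, sum_const, card_univ, nsmul_eq_mul, mul_one]
    _ = Fintype.card F - ZMod.χ₄ (Fintype.card F) := by
        rw [hsum, sum_quadraticChar_mul_quadraticChar_neg_one_sub hF, quadraticChar_neg_one hF]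
        ring

end FiniteField

lemma card_conic_zmod_prime_pow_succ {p : ℕ} [hp : Fact p.Prime] (hp2 : p ≠ 2) (k : ℕ) :
    (Nat.card (Conic (ZMod (p ^ (k + 1)))) : ℤ) = p ^ (k + 1) - ZMod.χ₄ p * p ^ k := by
  induction k with
  | zero =>
    have h := card_conic_of_ringChar_ne_two (F := ZMod p) (by rwa [ZMod.ringChar_zmod_n])
    rw [ZMod.card] at h
    rw [zero_add, pow_one, pow_one, pow_zero, mul_one, h]
  | succ k ih =>
    rw [card_conic_zmod_prime_pow_add_two hp2]
    push_cast
    rw [ih]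
    ring

end ConicCount

section ArithmeticFunctions

open ArithmeticFunction

/-- The Dirichlet inverse `n ↦ μ(n) χ(n)` of an integer-valued Dirichlet character `χ`. -/
def twistedMoebius {N : ℕ} (χ : MulChar (ZMod N) ℤ) : ArithmeticFunction ℤ :=
  ⟨fun n => moebius n * χ n, by simp⟩

/-- The identity on odd numbers, extended by zero. -/
def oddId : ArithmeticFunction ℤ :=
  ⟨fun n => if Odd n then n else 0, by simp⟩

/-- The number of points of the conic `x ^ 2 + y ^ 2 = -1` modulo `n` for odd `n`, extended by zero:
a sphere of even radius carries no primitive point. -/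
noncomputable def oddConicCount : ArithmeticFunction ℤ :=
  ⟨fun n => if Odd n then Nat.card (Conic (ZMod n)) else 0, by simp⟩

variable {N : ℕ} (χ : MulChar (ZMod N) ℤ)

lemma twistedMoebius_apply (n : ℕ) : twistedMoebius χ n = moebius n * χ n := rfl

lemma oddId_apply (n : ℕ) : oddId n = if Odd n then (n : ℤ) else 0 := rfl

lemma oddConicCount_apply (n : ℕ) :
    oddConicCount n = if Odd n then (Nat.card (Conic (ZMod n)) : ℤ) else 0 := rfl

lemma isMultiplicative_twistedMoebius : (twistedMoebius χ).IsMultiplicative := by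
  refine ⟨by simp [twistedMoebius_apply], fun {m n} h => ?_⟩
  simp only [twistedMoebius_apply, isMultiplicative_moebius.map_mul_of_coprime h, Nat.cast_mul,
    map_mul]
  ring

lemma isMultiplicative_oddId : oddId.IsMultiplicative := by
  refine ⟨by simp [oddId_apply], fun {m n} _ => ?_⟩
  simp only [oddId_apply, Nat.odd_mul, ite_and, Nat.cast_mul]
  split_ifs <;> simp

lemma isMultiplicative_oddConicCount : oddConicCount.IsMultiplicative := by
  refine ⟨?_, fun {m n} h => ?_⟩
  · have : Unique (Conic (ZMod 1)) :=
      { default := ⟨(0, 0), Subsingleton.elim (α := ZMod 1) _ _⟩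
        uniq _ := Subtype.ext (Subsingleton.elim (α := ZMod 1 × ZMod 1) _ _) }
    rw [oddConicCount_apply, if_pos odd_one, Nat.card_unique, Nat.cast_one]
  · simp only [oddConicCount_apply, Nat.odd_mul, ite_and, card_conic_zmod_mul h, Nat.cast_mul]
    split_ifs <;> simp

lemma twistedMoebius_mul_apply_prime_pow_succ (g : ArithmeticFunction ℤ) {p : ℕ} (hp : p.Prime)
    (k : ℕ) :
    (twistedMoebius χ * g) (p ^ (k + 1)) = g (p ^ (k + 1)) - χ p * g (p ^ k) := by
  have hvanish (i : ℕ) : twistedMoebius χ (p ^ (i + 1 + 1)) = 0 := by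
    rw [twistedMoebius_apply, moebius_apply_prime_pow hp (by lia), if_neg (by lia), zero_mul]
  have hdiv : p ^ (k + 1) / p = p ^ k := by rw [pow_succ, Nat.mul_div_cancel _ hp.pos]
  rw [mul_apply, Nat.sum_divisorsAntidiagonal fun a b => twistedMoebius χ a * g b,
    Nat.sum_divisors_prime_pow hp, sum_range_succ', sum_range_succ']
  simp only [hvanish, zero_mul, sum_const_zero, zero_add, pow_zero, pow_one, Nat.div_one, hdiv,
    (isMultiplicative_twistedMoebius χ).map_one, twistedMoebius_apply χ p, moebius_apply_prime hp]
  ring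

theorem oddConicCount_eq : oddConicCount = twistedMoebius ZMod.χ₄ * oddId := by
  rw [isMultiplicative_oddConicCount.eq_iff_eq_on_prime_powers _ _
    ((isMultiplicative_twistedMoebius _).mul isMultiplicative_oddId)]
  rintro p (_ | k) hp
  · rw [pow_zero, isMultiplicative_oddConicCount.map_one,
      ((isMultiplicative_twistedMoebius _).mul isMultiplicative_oddId).map_one]
  rw [twistedMoebius_mul_apply_prime_pow_succ _ _ hp]
  simp only [oddConicCount_apply, oddId_apply]
  rcases hp.eq_two_or_odd' with rfl | hodd
  · have : ¬Odd (2 ^ (k + 1)) := Nat.not_odd_iff_even.2 (even_two.pow_of_ne_zero k.succ_ne_zero)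
    have hχ : ZMod.χ₄ (2 : ℕ) = 0 := by decide
    rw [if_neg this, if_neg this, hχ, zero_mul, sub_zero]
  · have : Fact p.Prime := ⟨hp⟩
    have hp2 : p ≠ 2 := fun h => Nat.not_even_iff_odd.2 hodd (h ▸ even_two)
    rw [if_pos hodd.pow, if_pos hodd.pow, if_pos hodd.pow, card_conic_zmod_prime_pow_succ hp2]
    push_cast
    rfl

theorem card_primitivePoint {q : ℕ} (hq : 0 < q) :
    (Nat.card {x : Fin 3 → ℤ // IsPrimitivePoint q x} : ℤ) = 6 * oddConicCount q := by
  rw [oddConicCount_apply]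
  split_ifs with hodd
  · have hpoint : Nat.card {x : Fin 3 → ℤ // IsPrimitivePoint q x} =
        3 * Nat.card {x : Fin 3 → ℤ // IsPrimitivePoint q x ∧ Odd (x 2)} :=
      card_primitivePoint_eq_mul_card_odd_at le_rfl 2
    have hconic := CoprimePair.card_eq hq
    have hhopf := CoprimePair.card_eq_mul_card_odd_point hodd
    lia
  · have : IsEmpty {x : Fin 3 → ℤ // IsPrimitivePoint q x} :=
      ⟨fun x => hodd (x.2.odd_and_card_odd_eq_one le_rfl).1⟩
    rw [Nat.card_of_isEmpty, Nat.cast_zero, mul_zero]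

end ArithmeticFunctions

section DirichletSeries

variable {N : ℕ} (χ : MulChar (ZMod N) ℤ)

lemma LSeries_term_intCast (a : ℕ → ℤ) {k : ℕ} (hk : k ≠ 0) (n : ℕ) :
    LSeries.term (fun n => (a n : ℂ)) k n = ((a n / n ^ k : ℝ) : ℂ) := by
  rcases eq_or_ne n 0 with rfl | hn
  · simp [hk]
  · rw [LSeries.term_of_ne_zero hn, Complex.cpow_natCast]
    push_cast
    rfl

lemma abs_twistedMoebius_le_one (n : ℕ) : |twistedMoebius χ n| ≤ 1 := by
  rw [twistedMoebius_apply, abs_mul]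
  refine mul_le_one₀ ArithmeticFunction.abs_moebius_le_one (abs_nonneg _) ?_
  by_cases hn : IsUnit (n : ZMod N)
  · exact (Int.isUnit_iff_abs_eq.1 (hn.map χ)).le
  · rw [χ.map_nonunit hn, abs_zero]
    exact zero_le_one

theorem hasSum_twistedMoebius_div_pow {k : ℕ} (hk : 2 ≤ k) :
    HasSum (fun n : ℕ => (twistedMoebius χ n : ℝ) / (n : ℝ) ^ k)
      (∑' n : ℕ+, (χ ((n : ℕ) : ZMod N) : ℝ) / (n : ℝ) ^ k)⁻¹ := by
  set ψ : DirichletCharacter ℂ N := χ.ringHomComp (Int.castRingHom ℂ)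
  have hk0 : k ≠ 0 := by lia
  have hk1 : 1 < (k : ℂ).re := by rw [Complex.natCast_re]; exact_mod_cast hk
  have hχ : LSeries.term (fun n => ψ n) k = fun n : ℕ => ((χ n / n ^ k : ℝ) : ℂ) :=
    funext (LSeries_term_intCast (fun n => χ n) hk0)
  have hμ : LSeries.term ((fun n : ℕ => ψ n) * fun n => (ArithmeticFunction.moebius n : ℂ)) k =
      fun n : ℕ => ((twistedMoebius χ n / n ^ k : ℝ) : ℂ) := by
    rw [← funext (LSeries_term_intCast (twistedMoebius χ) hk0)]
    congr 1
    ext n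
    simp [ψ, twistedMoebius_apply, mul_comm]
  have hχ_summable := DirichletCharacter.LSeriesSummable_of_one_lt_re ψ hk1
  have hμ_summable := DirichletCharacter.LSeriesSummable_mul ψ
    (ArithmeticFunction.LSeriesSummable_moebius_iff.2 hk1)
  have hprod := DirichletCharacter.LSeries.mul_mu_eq_one ψ hk1
  rw [LSeriesSummable, hχ, Complex.summable_ofReal] at hχ_summable
  rw [LSeriesSummable, hμ, Complex.summable_ofReal] at hμ_summable
  rw [LSeries, LSeries, hχ, hμ, ← Complex.ofReal_tsum, ← Complex.ofReal_tsum,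
    ← Complex.ofReal_mul, Complex.ofReal_eq_one, hχ_summable.tsum_eq_zero_add, Nat.cast_zero,
    Nat.cast_zero, zero_pow hk0, div_zero, zero_add] at hprod
  rw [tsum_pnat_eq_tsum_succ (f := fun n : ℕ => (χ n : ℝ) / (n : ℝ) ^ k),
    inv_eq_of_mul_eq_one_right hprod]
  exact hμ_summable.hasSum

end DirichletSeries

section Convolution

lemma sum_range_add_one_eq_sum_Ioc {M : Type*} [AddCommMonoid M] {f : ℕ → M} (hf : f 0 = 0)
    (n : ℕ) : ∑ i ∈ range (n + 1), f i = ∑ i ∈ Ioc 0 n, f i := by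
  induction n with
  | zero => simp [hf]
  | succ n ih => rw [sum_range_succ, ih, sum_Ioc_succ_top n.zero_le]

lemma abs_sum_Ioc_div_sq_sub_le {a : ℕ → ℝ} (ha : ∀ n, |a n| ≤ 1) {L : ℝ}
    (hL : HasSum (fun n : ℕ => a n / (n : ℝ) ^ 2) L) {N : ℕ} (hN : N ≠ 0) :
    |∑ n ∈ Ioc 0 N, a n / (n : ℝ) ^ 2 - L| ≤ (N : ℝ)⁻¹ := by
  have hlim := (tendsto_const_nhds (x := ∑ n ∈ Ioc 0 N, a n / (n : ℝ) ^ 2)).sub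
    ((Filter.tendsto_add_atTop_iff_nat 1).2 hL.tendsto_sum_nat) |>.abs
  refine le_of_tendsto hlim (Filter.eventually_atTop.2 ⟨N, fun M hNM => ?_⟩)
  rw [sum_range_add_one_eq_sum_Ioc (by simp), ← sum_Ioc_consecutive _ N.zero_le hNM,
    sub_add_cancel_left, abs_neg]
  calc |∑ n ∈ Ioc N M, a n / (n : ℝ) ^ 2|
      ≤ ∑ n ∈ Ioc N M, ((n : ℝ) ^ 2)⁻¹ := by
        refine (abs_sum_le_sum_abs _ _).trans (sum_le_sum fun n _ => ?_)
        rw [abs_div, abs_of_nonneg (sq_nonneg (n : ℝ)), div_eq_mul_inv]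
        exact mul_le_of_le_one_left (by positivity) (ha n)
    _ ≤ (N : ℝ)⁻¹ - (M : ℝ)⁻¹ := sum_Ioc_inv_sq_le_sub hN hNM
    _ ≤ (N : ℝ)⁻¹ := sub_le_self _ (by positivity)

variable {f g : ArithmeticFunction ℝ} {c C L T : ℝ}

lemma abs_sum_mul_sub_sum_div_sq_le (hf : ∀ n, |f n| ≤ 1)
    (hg : ∀ x : ℝ, 1 ≤ x → |∑ m ∈ Ioc 0 ⌊x⌋₊, g m - c * x ^ 2| ≤ C * x) (hT : 1 ≤ T) :
    |∑ q ∈ Ioc 0 ⌊T⌋₊, (f * g) q - c * T ^ 2 * ∑ d ∈ Ioc 0 ⌊T⌋₊, f d / (d : ℝ) ^ 2| ≤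
      C * T * (1 + Real.log T) := by
  have hT0 : 0 ≤ T := zero_le_one.trans hT
  have hC : 0 ≤ C := by simpa only [mul_one] using (abs_nonneg _).trans (hg 1 le_rfl)
  have hterm : ∀ d ∈ Ioc 0 ⌊T⌋₊,
      |f d * ∑ m ∈ Ioc 0 (⌊T⌋₊ / d), g m - c * T ^ 2 * (f d / (d : ℝ) ^ 2)| ≤
        C * T * (d : ℝ)⁻¹ := by
    intro d hd
    obtain ⟨hd0, hdT⟩ := mem_Ioc.1 hd
    replace hd0 : (0 : ℝ) < d := Nat.cast_pos.2 hd0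
    have hgd := hg (T / d) ((one_le_div hd0).2 ((Nat.le_floor_iff hT0).1 hdT))
    rw [Nat.floor_div_natCast] at hgd
    calc |f d * ∑ m ∈ Ioc 0 (⌊T⌋₊ / d), g m - c * T ^ 2 * (f d / (d : ℝ) ^ 2)|
        = |f d| * |∑ m ∈ Ioc 0 (⌊T⌋₊ / d), g m - c * (T / d) ^ 2| := by
          rw [← abs_mul]
          congr 1
          ring
      _ ≤ 1 * (C * (T / d)) := by gcongr; exact hf d
      _ = C * T * (d : ℝ)⁻¹ := by ring
  rw [ArithmeticFunction.sum_Ioc_mul_eq_sum_sum, mul_sum, ← sum_sub_distrib]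
  calc _ ≤ ∑ d ∈ Ioc 0 ⌊T⌋₊, C * T * (d : ℝ)⁻¹ :=
        (abs_sum_le_sum_abs _ _).trans (sum_le_sum hterm)
    _ = C * T * (harmonic ⌊T⌋₊ : ℝ) := by
        rw [← mul_sum, harmonic_eq_sum_Icc]
        push_cast
        rfl
    _ ≤ C * T * (1 + Real.log T) := by
        gcongr
        exact harmonic_floor_le_one_add_log T hT

theorem abs_sum_mul_sub_le (hf : ∀ n, |f n| ≤ 1)
    (hL : HasSum (fun n : ℕ => f n / (n : ℝ) ^ 2) L)
    (hg : ∀ x : ℝ, 1 ≤ x → |∑ m ∈ Ioc 0 ⌊x⌋₊, g m - c * x ^ 2| ≤ C * x) (hT : 1 ≤ T) :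
    |∑ q ∈ Ioc 0 ⌊T⌋₊, (f * g) q - c * L * T ^ 2| ≤
      C * T * (1 + Real.log T) + 2 * |c| * T := by
  have hN : 1 ≤ ⌊T⌋₊ := Nat.one_le_floor_iff T |>.2 hT
  have htail := abs_sum_Ioc_div_sq_sub_le hf hL (Nat.one_le_iff_ne_zero.1 hN)
  have hinv : (⌊T⌋₊ : ℝ)⁻¹ ≤ 2 / T := by
    have hlt := Nat.lt_floor_add_one T
    have : (1 : ℝ) ≤ ⌊T⌋₊ := Nat.one_le_cast.2 hN
    rw [inv_eq_one_div, div_le_div_iff₀ (by linarith) (by linarith)]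
    linarith
  set S := ∑ d ∈ Ioc 0 ⌊T⌋₊, f d / (d : ℝ) ^ 2
  calc |∑ q ∈ Ioc 0 ⌊T⌋₊, (f * g) q - c * L * T ^ 2|
      ≤ |∑ q ∈ Ioc 0 ⌊T⌋₊, (f * g) q - c * T ^ 2 * S| + |c * T ^ 2 * S - c * L * T ^ 2| :=
        abs_sub_le _ _ _
    _ ≤ C * T * (1 + Real.log T) + |c| * T ^ 2 * (2 / T) := by
        refine add_le_add (abs_sum_mul_sub_sum_div_sq_le hf hg hT) ?_
        rw [show c * T ^ 2 * S - c * L * T ^ 2 = c * T ^ 2 * (S - L) by ring, abs_mul, abs_mul,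
          abs_of_nonneg (sq_nonneg T)]
        gcongr
        exact htail.trans hinv
    _ = C * T * (1 + Real.log T) + 2 * |c| * T := by
        field_simp

theorem sum_mul_sub_isBigO (hf : ∀ n, |f n| ≤ 1)
    (hL : HasSum (fun n : ℕ => f n / (n : ℝ) ^ 2) L)
    (hg : ∀ x : ℝ, 1 ≤ x → |∑ m ∈ Ioc 0 ⌊x⌋₊, g m - c * x ^ 2| ≤ C * x) :
    (fun T : ℝ => ∑ q ∈ Ioc 0 ⌊T⌋₊, (f * g) q - c * L * T ^ 2) =O[Filter.atTop]
      fun T : ℝ => T * Real.log T := by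
  have hC : 0 ≤ C := by simpa only [mul_one] using (abs_nonneg _).trans (hg 1 le_rfl)
  refine Asymptotics.IsBigO.of_bound (2 * C + 2 * |c|) ?_
  filter_upwards [Filter.eventually_ge_atTop 1,
    Real.tendsto_log_atTop.eventually_ge_atTop 1] with T hT hlog
  rw [Real.norm_eq_abs, Real.norm_of_nonneg (by positivity)]
  calc _ ≤ C * T * (1 + Real.log T) + 2 * |c| * T := abs_sum_mul_sub_le hf hL hg hT
    _ ≤ C * T * (Real.log T + Real.log T) + 2 * |c| * (T * Real.log T) := by
        gcongr
        exact le_mul_of_one_le_right (by linarith) hlog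
    _ = (2 * C + 2 * |c|) * (T * Real.log T) := by ring

end Convolution

section OddSums

lemma sum_oddId (M : ℕ) : ∑ m ∈ Ioc 0 M, oddId m = (((M + 1) / 2 : ℕ) : ℤ) ^ 2 := by
  induction M with
  | zero => simp
  | succ M ih =>
    rw [sum_Ioc_succ_top M.zero_le, ih, oddId_apply]
    rcases Nat.even_or_odd' M with ⟨c, rfl | rfl⟩
    · rw [if_pos (odd_two_mul_add_one c), show (2 * c + 1) / 2 = c by lia,
        show (2 * c + 1 + 1) / 2 = c + 1 by lia]
      push_cast
      ring
    · rw [if_neg (Nat.not_odd_iff_even.2 (odd_two_mul_add_one c).add_one), add_zero,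
        show (2 * c + 1 + 1 + 1) / 2 = (2 * c + 1 + 1) / 2 by lia]

lemma abs_sum_oddId_sub_le {x : ℝ} (hx : 1 ≤ x) :
    |∑ m ∈ Ioc 0 ⌊x⌋₊, (oddId m : ℝ) - 1 / 4 * x ^ 2| ≤ 1 * x := by
  have hle : (⌊x⌋₊ : ℝ) ≤ x := Nat.floor_le (by linarith)
  have hlt : x < ⌊x⌋₊ + 1 := Nat.lt_floor_add_one x
  rw [← Int.cast_sum, sum_oddId]
  set k := (⌊x⌋₊ + 1) / 2
  have hk : (⌊x⌋₊ : ℝ) ≤ 2 * k := by exact_mod_cast (by lia : ⌊x⌋₊ ≤ 2 * k)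
  have hk' : 2 * (k : ℝ) ≤ ⌊x⌋₊ + 1 := by exact_mod_cast (by lia : 2 * k ≤ ⌊x⌋₊ + 1)
  push_cast
  rw [abs_le]
  constructor <;> nlinarith

end OddSums

section RationalPoints

variable {ι : Type*} [Fintype ι]

lemma gcd_natAbs_eq_one_iff {x : ι → ℤ} {q : ℤ} :
    Nat.gcd (univ.gcd fun i => (x i).natAbs) q.natAbs = 1 ↔
      ∀ d : ℤ, (∀ i, d ∣ x i) → d ∣ q → IsUnit d := by
  refine ⟨fun h d hx hq => Int.isUnit_iff_natAbs_eq.2 (Nat.eq_one_of_dvd_one (h ▸ Nat.dvd_gcd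
    (dvd_gcd fun i _ => Int.natAbs_dvd_natAbs.2 (hx i)) (Int.natAbs_dvd_natAbs.2 hq))), fun h => ?_⟩
  refine Int.isUnit_iff_natAbs_eq.1 (h (Nat.gcd _ _ : ℕ) (fun i => ?_) ?_)
  · exact Int.natCast_dvd.2 ((Nat.gcd_dvd_left _ _).trans (gcd_dvd (mem_univ i)))
  · exact Int.natCast_dvd.2 (Nat.gcd_dvd_right _ _)

theorem card_rational_points_eq_sum (T : ℝ) :
    Nat.card {pq : (ι → ℤ) × ℤ //
        (∑ i, (pq.1 i) ^ 2) = pq.2 ^ 2 ∧ 0 < pq.2 ∧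
        Nat.gcd (univ.gcd fun i => (pq.1 i).natAbs) pq.2.natAbs = 1 ∧ (pq.2 : ℝ) ≤ T} =
      ∑ q ∈ Ioc 0 ⌊T⌋₊, Nat.card {x : ι → ℤ // IsPrimitivePoint q x} := by
  rw [← sum_coe_sort, ← Nat.card_sigma]
  symm
  refine Nat.card_eq_of_bijective (fun y => ⟨(y.2.1, y.1.1), ?_⟩) ⟨?_, ?_⟩
  · obtain ⟨⟨q, hq⟩, x, hx, hxq⟩ := y
    obtain ⟨hq0, hqT⟩ := mem_Ioc.1 hq
    exact ⟨hx, Nat.cast_pos.2 hq0, gcd_natAbs_eq_one_iff.2 hxq,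
      by simpa using (Nat.le_floor_iff' hq0.ne').1 hqT⟩
  · rintro ⟨⟨q, hq⟩, x, hx⟩ ⟨⟨q', hq'⟩, x', hx'⟩ h
    obtain ⟨rfl, hqq'⟩ := Prod.mk.inj (congrArg Subtype.val h)
    obtain rfl : q = q' := Nat.cast_injective hqq'
    rfl
  · rintro ⟨⟨x, q⟩, hx, hq0, hxq, hqT⟩
    lift q to ℕ using hq0.le
    rw [Int.cast_natCast] at hqT
    have hq0 : 0 < q := Nat.cast_pos.1 hq0
    exact ⟨⟨⟨q, mem_Ioc.2 ⟨hq0, (Nat.le_floor_iff' hq0.ne').2 hqT⟩⟩,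
      x, hx, gcd_natAbs_eq_one_iff.1 hxq⟩, rfl⟩

end RationalPoints

end RationalSphere

theorem rational_points_sphere_two_asymptotic_general :
    (fun T : ℝ =>
      ((Nat.card {pq : (Fin 3 → ℤ) × ℤ //
            (∑ i, (pq.1 i) ^ 2) = pq.2 ^ 2 ∧ 0 < pq.2 ∧
            Nat.gcd (Finset.univ.gcd fun i => (pq.1 i).natAbs) pq.2.natAbs = 1 ∧
            (pq.2 : ℝ) ≤ T} : ℝ))
        - (3 / (2 * ∑' n : ℕ+, (ZMod.χ₄ ((n : ℕ) : ZMod 4) : ℝ) / (n : ℝ) ^ 2)) * T ^ 2)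
      =O[Filter.atTop] fun T : ℝ => T * Real.log T := by
  open RationalSphere in
  have hcount (T : ℝ) : (∑ q ∈ Ioc 0 ⌊T⌋₊,
      (Nat.card {x : Fin 3 → ℤ // IsPrimitivePoint q x} : ℝ)) =
      6 * ∑ q ∈ Ioc 0 ⌊T⌋₊, ((twistedMoebius ZMod.χ₄ : ArithmeticFunction ℝ) * oddId) q := by
    rw [mul_sum]
    refine sum_congr rfl fun q hq => ?_
    rw [← ArithmeticFunction.intCoe_mul, ← oddConicCount_eq, ArithmeticFunction.intCoe_apply]
    exact_mod_cast card_primitivePoint (mem_Ioc.1 hq).1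
  have hmain := (sum_mul_sub_isBigO (f := twistedMoebius ZMod.χ₄) (g := oddId)
    (fun n => by
      rw [ArithmeticFunction.intCoe_apply]
      exact_mod_cast abs_twistedMoebius_le_one ZMod.χ₄ n)
    (hasSum_twistedMoebius_div_pow ZMod.χ₄ le_rfl)
    (fun _ hx => abs_sum_oddId_sub_le hx)).const_mul_left 6
  refine hmain.congr_left fun T => ?_
  rw [card_rational_points_eq_sum, Nat.cast_sum, hcount]
  ring

/-- `N(S²;T) = (3/(2G)) T² + O(T (log T)³)`, where `N(S²;T)` counts primitive integer
solutions of `p₁²+p₂²+p₃² = q²` with `0 < q ≤ T` and `G = L(χ₋₄,2)` is Catalan's constant. -/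
theorem rational_points_sphere_two_asymptotic :
    (fun T : ℝ =>
      ((Nat.card {pq : (Fin 3 → ℤ) × ℤ //
            (∑ i, (pq.1 i) ^ 2) = pq.2 ^ 2 ∧ 0 < pq.2 ∧
            Nat.gcd (Finset.univ.gcd fun i => (pq.1 i).natAbs) pq.2.natAbs = 1 ∧
            (pq.2 : ℝ) ≤ T} : ℝ))
        - (3 / (2 * ∑' n : ℕ+, (ZMod.χ₄ ((n : ℕ) : ZMod 4) : ℝ) / (n : ℝ) ^ 2)) * T ^ 2)
      =O[Filter.atTop] fun T : ℝ => T * Real.log T ^ 3 := by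
  have hlog : (Real.log ^ 1) =O[Filter.atTop] (Real.log ^ 3) :=
    .pow_of_le_right (Real.tendsto_log_atTop.eventually_ge_atTop 1) (by norm_num)
  rw [pow_one] at hlog
  exact rational_points_sphere_two_asymptotic_general.trans
    ((Asymptotics.isBigO_refl _ _).mul hlog)
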